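/- For every ε ∈ [0,1) and every ε-achievable rate R in the Wyner–Ziv problem, there exists a pmf P* = P*_{UXYZ} on 𝒰×𝒳×𝒴×𝒵 with |𝒰| ≤ |𝒳|·|𝒴|·|𝒵| + 1 and P*_{XY} = P_{XY} such that R ≥ I_{P*}(X;U|Y), I_{P*}(Y;U|X) = 0, I_{P*}(X;Z|Y,U) = 0, and E_{P*}[d(X,Z)] ≤ D; in particular R ≥ R_min. -/

import Mathlib

open Filter

noncomputable section

/-- `p` is a probability mass function on the finite alphabet `α`. -/
def IsPMF {α : Type*} [Fintype α] (p : α → ℝ) : Prop :=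
  (∀ a, 0 ≤ p a) ∧ ∑ a, p a = 1

open Classical in
/-- Probability that the random variable `X` takes the value `a`, under the pmf `p`. -/
def probEq {Ω α : Type*} [Fintype Ω] (p : Ω → ℝ) (X : Ω → α) (a : α) : ℝ :=
  ∑ ω, if X ω = a then p ω else 0

/-- Shannon entropy (base 2) of the random variable `X` under the pmf `p`. -/
def entOf {Ω α : Type*} [Fintype Ω] (p : Ω → ℝ) (X : Ω → α) : ℝ :=
  -∑ ω, p ω * Real.logb 2 (probEq p X (X ω))

/-- Conditional Shannon entropy `H(X | Y)` under the pmf `p`. -/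
def condEntOf {Ω α β : Type*} [Fintype Ω] (p : Ω → ℝ) (X : Ω → α) (Y : Ω → β) : ℝ :=
  entOf p (fun ω => (X ω, Y ω)) - entOf p Y

/-- Mutual information `I(X ; Y)` under the pmf `p`. -/
def miOf {Ω α β : Type*} [Fintype Ω] (p : Ω → ℝ) (X : Ω → α) (Y : Ω → β) : ℝ :=
  entOf p X + entOf p Y - entOf p (fun ω => (X ω, Y ω))

/-- Conditional mutual information `I(X ; Y | Z)` under the pmf `p`. -/
def condMIOf {Ω α β γ : Type*} [Fintype Ω] (p : Ω → ℝ) (X : Ω → α) (Y : Ω → β)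
    (Z : Ω → γ) : ℝ :=
  condEntOf p X Z + condEntOf p Y Z - condEntOf p (fun ω => (X ω, Y ω)) Z

open Classical in
/-- Probability of the set `S` under the pmf `p`. -/
def probSet {Ω : Type*} [Fintype Ω] (p : Ω → ℝ) (S : Set Ω) : ℝ :=
  ∑ ω, if ω ∈ S then p ω else 0

open Classical in
/-- Number of occurrences of the symbol `a` in the sequence `w`. -/
def Ncount {W : Type*} {n : ℕ} (w : Fin n → W) (a : W) : ℕ :=
  (Finset.univ.filter (fun i => w i = a)).card

/-- The strongly typical set `T_μ⁽ⁿ⁾(P)`: sequences whose empirical frequencies differ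
from `P` by at most `μ` in every entry and that contain no symbol of zero probability. -/
def typicalSet {W : Type*} [Fintype W] (P : W → ℝ) (μ : ℝ) (n : ℕ) : Set (Fin n → W) :=
  {w | ∀ a, |((Ncount w a : ℝ)) / n - P a| ≤ μ ∧ (P a = 0 → Ncount w a = 0)}

/-- The typicality parameter `μ_n = n^{-1/3}`. -/
def μseq (n : ℕ) : ℝ := (n : ℝ) ^ (-(1/3 : ℝ))

/-- The i.i.d. pmf on sequences of length `n`. -/
def iidSeq {W : Type*} [Fintype W] (P : W → ℝ) (n : ℕ) (w : Fin n → W) : ℝ :=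
  ∏ i, P (w i)

/-- The i.i.d. pmf on pairs of sequences of length `n`. -/
def iidPair {X Y : Type*} [Fintype X] [Fintype Y] (P : X × Y → ℝ) (n : ℕ)
    (xy : (Fin n → X) × (Fin n → Y)) : ℝ :=
  ∏ i, P (xy.1 i, xy.2 i)

/-- A pair of sequences viewed as one sequence over the product alphabet. -/
def pairSeq {X Y : Type*} {n : ℕ} (xy : (Fin n → X) × (Fin n → Y)) : Fin n → X × Y :=
  fun i => (xy.1 i, xy.2 i)

open Classical in
/-- Rate `R` is `ε`-achievable for lossy source coding with side information
(Wyner–Ziv) under the excess-distortion criterion: there exist sequences (in the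
blocklength `n`) of encoders into at most `2^{nR}` messages and of decoders such that
`limsup_n Pr[(1/n)∑ᵢ d(Xᵢ,Zᵢ) > D] ≤ ε`. -/
def wzAchievable {X Y Z : Type*} [Fintype X] [Fintype Y] [Fintype Z]
    (P : X × Y → ℝ) (d : X → Z → ℝ) (D R ε : ℝ) : Prop :=
  0 < R ∧
  ∃ (M : ℕ → ℕ) (φ : ∀ n : ℕ, (Fin n → X) → Fin (M n))
    (g : ∀ n : ℕ, Fin (M n) → (Fin n → Y) → (Fin n → Z)),
    (∀ n, (M n : ℝ) ≤ 2 ^ ((n : ℝ) * R)) ∧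
    limsup (fun n => ∑ xy : (Fin n → X) × (Fin n → Y),
        if D < (∑ i, d (xy.1 i) (g n (φ n xy.1) xy.2 i)) / n
        then iidPair P n xy else 0) atTop ≤ ε

/-- The set of values `I(X;S|Y)` over joint pmfs `P_{SXYZ} = P_{S|X}·P_{XY}·P_{Z|SY}`
(with `S` on a finite auxiliary alphabet) satisfying `E[d(X,Z)] ≤ D`. -/
def RminSet {X Y Z : Type*} [Fintype X] [Fintype Y] [Fintype Z]
    (P : X × Y → ℝ) (d : X → Z → ℝ) (D : ℝ) : Set ℝ :=
  {r | ∃ (m : ℕ) (PS : X → Fin m → ℝ) (PZ : Fin m × Y → Z → ℝ),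
      (∀ x, IsPMF (PS x)) ∧ (∀ sy, IsPMF (PZ sy)) ∧
      (∑ q : Fin m × X × Y × Z,
          (PS q.2.1 q.1 * P (q.2.1, q.2.2.1) * PZ (q.1, q.2.2.1) q.2.2.2)
            * d q.2.1 q.2.2.2) ≤ D ∧
      r = condMIOf
            (fun q : Fin m × X × Y × Z =>
              PS q.2.1 q.1 * P (q.2.1, q.2.2.1) * PZ (q.1, q.2.2.1) q.2.2.2)
            (fun q => q.2.1) (fun q => q.1) (fun q => q.2.2.1)}

/-- `R_min := min I(X;S|Y)` over admissible auxiliary pmfs. -/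
def Rmin {X Y Z : Type*} [Fintype X] [Fintype Y] [Fintype Z]
    (P : X × Y → ℝ) (d : X → Z → ℝ) (D : ℝ) : ℝ :=
  sInf (RminSet P d D)

/-!
Condition the i.i.d. block on the event that the code meets the distortion constraint. The
conditioned law `p` has relative entropy at most `-log Pr[event]` with respect to the source, and
this stays bounded in `n` because the event keeps probability about `1 - ε`; after division by `n`
every deviation from an i.i.d. source is therefore negligible.

With `T` a uniform time and `U = (X_{<T}, Y_{>T}, message, T)`, the Csiszár sum identity and the
chain rule evaluate `n H(X|U) - n H(Y|U)` and bound `n H(X|Y,Z,U)` below by block entropies, while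
Gibbs' inequality compares the remaining single-letter entropies with block entropies. Together
they bound both `I(Y;U|X) + I(X;Z|Y,U)` and the excess of `I(X;U|Y)` over the rate by
`-log Pr[event] / n`.

Carathéodory's theorem, applied to the law of `(X, Y, Z)` and one Lagrangian combination of these
two quantities, bounds the auxiliary alphabet independently of `n`. Compactness of the simplex then
gives a limit law in which all constraints hold exactly.
-/

section FiniteDistributions

variable {Ω Ω' α β : Type*} [Fintype Ω] [Fintype Ω'] {p q : Ω → ℝ}

lemma probEq_nonneg (hp : ∀ ω, 0 ≤ p ω) (A : Ω → α) (a : α) : 0 ≤ probEq p A a :=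
  Finset.sum_nonneg fun ω _ => by split_ifs; exacts [hp ω, le_rfl]

lemma apply_le_probEq (hp : ∀ ω, 0 ≤ p ω) (A : Ω → α) (ω : Ω) : p ω ≤ probEq p A (A ω) := by
  classical
  have h := Finset.single_le_sum (f := fun ω' => if A ω' = A ω then p ω' else 0)
    (fun ω' _ => by split_ifs; exacts [hp ω', le_rfl]) (Finset.mem_univ ω)
  simpa [probEq] using h

lemma probEq_pos (hp : ∀ ω, 0 ≤ p ω) (A : Ω → α) {ω : Ω} (hω : 0 < p ω) :
    0 < probEq p A (A ω) :=
  hω.trans_le (apply_le_probEq hp A ω)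

lemma exists_pos_of_probEq_pos {A : Ω → α} {a : α} (h : 0 < probEq p A a) :
    ∃ ω, A ω = a ∧ 0 < p ω := by
  classical
  obtain ⟨ω, -, hω⟩ := Finset.exists_lt_of_sum_lt
    (f := fun _ => (0 : ℝ)) (by simpa [probEq] using h)
  split_ifs at hω with hA
  exacts [⟨ω, hA, hω⟩, absurd hω (lt_irrefl 0)]

lemma probEq_eq_zero {A : Ω → α} {a : α} (h : ∀ ω, A ω = a → p ω = 0) : probEq p A a = 0 :=
  Finset.sum_eq_zero fun ω _ => by split_ifs with hA; exacts [h ω hA, rfl]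

lemma probEq_congr (p : Ω → ℝ) {A : Ω → α} {B : Ω → β} {a : α} {b : β}
    (h : ∀ ω, A ω = a ↔ B ω = b) : probEq p A a = probEq p B b := by
  classical exact Finset.sum_congr rfl fun ω _ => if_congr (h ω) rfl rfl

lemma probEq_id (p : Ω → ℝ) (ω : Ω) : probEq p id ω = p ω := by
  classical simp [probEq]

lemma probEq_const_mul (c : ℝ) (p : Ω → ℝ) (A : Ω → α) (a : α) :
    probEq (fun ω => c * p ω) A a = c * probEq p A a := by
  simp only [probEq, Finset.mul_sum, mul_ite, mul_zero]

lemma sum_probEq_mul [Fintype α] (p : Ω → ℝ) (A : Ω → α) (f : α → ℝ) :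
    ∑ a, probEq p A a * f a = ∑ ω, p ω * f (A ω) := by
  classical
  simp only [probEq, Finset.sum_mul]
  rw [Finset.sum_comm]
  simp [ite_mul]

lemma sum_probEq [Fintype α] (p : Ω → ℝ) (A : Ω → α) : ∑ a, probEq p A a = ∑ ω, p ω := by
  simpa using sum_probEq_mul p A fun _ => 1

lemma sum_probEq_prodMk_left [Fintype α] (p : Ω → ℝ) (A : Ω → α) (B : Ω → β) (b : β) :
    ∑ a, probEq p (fun ω => (A ω, B ω)) (a, b) = probEq p B b := by
  classical
  simp only [probEq]
  rw [Finset.sum_comm]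
  refine Finset.sum_congr rfl fun ω _ => ?_
  by_cases h : B ω = b <;> simp [h]

lemma probEq_probEq (p : Ω → ℝ) (V : Ω → Ω') (A : Ω' → α) (a : α) :
    probEq (probEq p V) A a = probEq p (fun ω => A (V ω)) a := by
  classical
  simpa [probEq] using sum_probEq_mul p V fun v => if A v = a then (1 : ℝ) else 0

lemma probEq_snd {U V : Type*} [Fintype U] [Fintype V] (q : U × V → ℝ) (v : V) :
    probEq q Prod.snd v = ∑ u, q (u, v) := by
  classical
  simp [probEq, Fintype.sum_prod_type]

lemma IsPMF.probEq [Fintype α] (hp : IsPMF p) (A : Ω → α) : IsPMF (probEq p A) :=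
  ⟨probEq_nonneg hp.1 A, (sum_probEq p A).trans hp.2⟩

lemma IsPMF.nonempty (hp : IsPMF p) : Nonempty Ω := by
  by_contra hΩ
  rw [not_nonempty_iff] at hΩ
  simpa using hp.2

lemma IsPMF.eq_of_forall_pos (hp : IsPMF p) (hq : IsPMF q)
    (h : ∀ ω, 0 < p ω → p ω = q ω) : p = q := by
  have hle : ∀ ω ∈ Finset.univ, p ω ≤ q ω := fun ω _ =>
    (hp.1 ω).eq_or_lt.elim (fun h0 => h0 ▸ hq.1 ω) fun hpos => (h ω hpos).le
  have heq := (Finset.sum_eq_sum_iff_of_le hle).1 (hp.2.trans hq.2.symm)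
  exact funext fun ω => heq ω (Finset.mem_univ ω)

lemma exists_isPMF_eq_sum_mul {ι : Type*} [Fintype α] [Nonempty α] (f : ι → α → ℝ)
    (hf : ∀ i a, 0 ≤ f i a) :
    ∃ k : ι → α → ℝ, (∀ i, IsPMF (k i)) ∧ ∀ i a, f i a = (∑ b, f i b) * k i a := by
  classical
  suffices h : ∀ i, ∃ k : α → ℝ, IsPMF k ∧ ∀ a, f i a = (∑ b, f i b) * k a by
    choose k hk using h
    exact ⟨k, fun i => (hk i).1, fun i => (hk i).2⟩
  intro i
  by_cases hsum : ∑ b, f i b = 0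
  · refine ⟨Pi.single (Classical.arbitrary α) 1, ⟨fun a => ?_, by simp⟩, fun a => ?_⟩
    · rw [Pi.single_apply]; split_ifs <;> norm_num
    · rw [hsum, zero_mul]
      exact (Finset.sum_eq_zero_iff_of_nonneg fun b _ => hf i b).1 hsum a (Finset.mem_univ a)
  · refine ⟨fun a => f i a / ∑ b, f i b, ⟨fun a => ?_, ?_⟩, fun a => ?_⟩
    · exact div_nonneg (hf i a) (Finset.sum_nonneg fun b _ => hf i b)
    · rw [← Finset.sum_div, div_self hsum]
    · rw [mul_div_cancel₀ _ hsum]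

end FiniteDistributions

section Gibbs

variable {Ω α : Type*} [Fintype Ω] {p : Ω → ℝ}

/-- Cross entropy (base 2) of the law of `A` under `p` relative to `q`; entropy is the case where
`q` is the law of `A` itself. Since `Real.logb 2 0 = 0`, it is meaningful only if `q` is positive
at every value that `A` takes with positive probability. -/
def crossEntOf (p : Ω → ℝ) (A : Ω → α) (q : α → ℝ) : ℝ :=
  -∑ ω, p ω * Real.logb 2 (q (A ω))

/-- Relative entropy (base 2) of the law of `A` under `p` with respect to `q`, with the same
support proviso as `crossEntOf`. -/
def relEntOf (p : Ω → ℝ) (A : Ω → α) (q : α → ℝ) : ℝ :=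
  crossEntOf p A q - entOf p A

lemma mul_log_le_mul_sub {a r : ℝ} (ha : 0 ≤ a) (hr : 0 < a → 0 < r) :
    a * Real.log r ≤ a * r - a := by
  rcases ha.eq_or_lt with rfl | ha
  · simp
  · linarith [mul_le_mul_of_nonneg_left (Real.log_le_sub_one_of_pos (hr ha)) ha.le]

lemma sum_mul_log_nonpos {r : Ω → ℝ} (hp : ∀ ω, 0 ≤ p ω) (hr : ∀ ω, 0 < p ω → 0 < r ω)
    (hsum : ∑ ω, p ω * r ω ≤ ∑ ω, p ω) : ∑ ω, p ω * Real.log (r ω) ≤ 0 :=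
  calc ∑ ω, p ω * Real.log (r ω)
      ≤ ∑ ω, (p ω * r ω - p ω) := Finset.sum_le_sum fun ω _ => mul_log_le_mul_sub (hp ω) (hr ω)
    _ ≤ 0 := by rw [Finset.sum_sub_distrib]; linarith

lemma eq_one_of_sum_mul_log_eq_zero {r : Ω → ℝ} (hp : ∀ ω, 0 ≤ p ω)
    (hr : ∀ ω, 0 < p ω → 0 < r ω) (hsum : ∑ ω, p ω * r ω ≤ ∑ ω, p ω)
    (hzero : ∑ ω, p ω * Real.log (r ω) = 0) {ω : Ω} (hω : 0 < p ω) : r ω = 1 := by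
  have hle : ∀ ω ∈ Finset.univ, p ω * Real.log (r ω) ≤ p ω * r ω - p ω := fun ω _ =>
    mul_log_le_mul_sub (hp ω) (hr ω)
  have hsums : ∑ ω, p ω * Real.log (r ω) = ∑ ω, (p ω * r ω - p ω) :=
    (Finset.sum_le_sum hle).antisymm (by rw [Finset.sum_sub_distrib]; linarith)
  have heq := (Finset.sum_eq_sum_iff_of_le hle).1 hsums ω (Finset.mem_univ ω)
  by_contra hne
  nlinarith [Real.log_lt_sub_one_of_pos (hr ω hω) hne]

lemma relEntOf_eq {A : Ω → α} {q : α → ℝ} (hp : ∀ ω, 0 ≤ p ω) (hq : ∀ ω, 0 < p ω → 0 < q (A ω)) :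
    relEntOf p A q =
      -(∑ ω, p ω * Real.log (q (A ω) / probEq p A (A ω))) / Real.log 2 := by
  rw [relEntOf, crossEntOf, entOf, neg_sub_neg, ← Finset.sum_sub_distrib,
    ← Finset.sum_neg_distrib, Finset.sum_div]
  refine Finset.sum_congr rfl fun ω _ => ?_
  rcases (hp ω).eq_or_lt with h0 | hpos
  · simp [← h0]
  · rw [Real.log_div (hq ω hpos).ne' (probEq_pos hp A hpos).ne', Real.logb, Real.logb]
    ring

variable [Fintype α] {A : Ω → α} {q : α → ℝ}

lemma sum_mul_div_probEq_le (hp : ∀ ω, 0 ≤ p ω) (A : Ω → α) (hq : ∀ a, 0 ≤ q a) :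
    ∑ ω, p ω * (q (A ω) / probEq p A (A ω)) ≤ ∑ a, q a := by
  rw [← sum_probEq_mul p A fun a => q a / probEq p A a]
  refine Finset.sum_le_sum fun a _ => ?_
  rcases (probEq_nonneg hp A a).eq_or_lt with h0 | hpos
  · simpa [← h0] using hq a
  · rw [mul_div_cancel₀ _ hpos.ne']

lemma relEntOf_nonneg (hp : ∀ ω, 0 ≤ p ω) (hq : ∀ a, 0 ≤ q a) (hsum : ∑ a, q a ≤ ∑ ω, p ω)
    (hpos : ∀ ω, 0 < p ω → 0 < q (A ω)) : 0 ≤ relEntOf p A q := by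
  rw [relEntOf_eq hp hpos]
  refine div_nonneg (neg_nonneg.2 (sum_mul_log_nonpos hp (fun ω hω => ?_) ?_))
    (Real.log_nonneg one_le_two)
  · exact div_pos (hpos ω hω) (probEq_pos hp A hω)
  · exact (sum_mul_div_probEq_le hp A hq).trans hsum

lemma probEq_eq_of_relEntOf_eq_zero (hp : ∀ ω, 0 ≤ p ω) (hq : ∀ a, 0 ≤ q a)
    (hsum : ∑ a, q a ≤ ∑ ω, p ω) (hpos : ∀ ω, 0 < p ω → 0 < q (A ω))
    (hzero : relEntOf p A q = 0) {ω : Ω} (hω : 0 < p ω) : probEq p A (A ω) = q (A ω) := by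
  rw [relEntOf_eq hp hpos, div_eq_zero_iff, neg_eq_zero] at hzero
  have hratio := eq_one_of_sum_mul_log_eq_zero hp
    (fun ω hω => div_pos (hpos ω hω) (probEq_pos hp A hω))
    ((sum_mul_div_probEq_le hp A hq).trans hsum)
    (hzero.resolve_right (Real.log_pos one_lt_two).ne') hω
  exact ((div_eq_one_iff_eq (probEq_pos hp A hω).ne').1 hratio).symm

lemma entOf_le_crossEntOf (hp : ∀ ω, 0 ≤ p ω) (hq : ∀ a, 0 ≤ q a) (hsum : ∑ a, q a ≤ ∑ ω, p ω)
    (hpos : ∀ ω, 0 < p ω → 0 < q (A ω)) : entOf p A ≤ crossEntOf p A q :=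
  sub_nonneg.1 (relEntOf_nonneg hp hq hsum hpos)

lemma entOf_le_logb_card (hp : IsPMF p) (A : Ω → α) :
    entOf p A ≤ Real.logb 2 (Fintype.card α) := by
  obtain ⟨ω₀⟩ := hp.nonempty
  have : Nonempty α := ⟨A ω₀⟩
  have hcard : (0 : ℝ) < Fintype.card α := by exact_mod_cast Fintype.card_pos
  calc entOf p A
      ≤ crossEntOf p A (fun _ => (Fintype.card α : ℝ)⁻¹) :=
        entOf_le_crossEntOf hp.1 (fun _ => (inv_pos.2 hcard).le) (by simp [hp.2, hcard.ne'])
          fun _ _ => inv_pos.2 hcard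
    _ = Real.logb 2 (Fintype.card α) := by
        rw [crossEntOf, ← Finset.sum_mul, hp.2, one_mul, Real.logb_inv, neg_neg]

end Gibbs

section ConditionalEntropy

variable {Ω Ω' α β γ : Type*} [Fintype Ω] [Fintype Ω']

lemma entOf_congr (p : Ω → ℝ) {A : Ω → α} {B : Ω → β}
    (h : ∀ ω ω', A ω = A ω' ↔ B ω = B ω') : entOf p A = entOf p B :=
  congrArg Neg.neg <| Finset.sum_congr rfl fun ω _ => by
    rw [probEq_congr p fun ω' => h ω' ω]

lemma condEntOf_congr (p : Ω → ℝ) (A : Ω → α) {B : Ω → β} {C : Ω → γ}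
    (h : ∀ ω ω', B ω = B ω' ↔ C ω = C ω') : condEntOf p A B = condEntOf p A C := by
  rw [condEntOf, condEntOf, entOf_congr p h,
    entOf_congr p (A := fun ω => (A ω, B ω)) (B := fun ω => (A ω, C ω))
      fun ω ω' => by simp only [Prod.mk.injEq, h]]

lemma entOf_probEq (p : Ω → ℝ) (V : Ω → Ω') (A : Ω' → α) :
    entOf (probEq p V) A = entOf p fun ω => A (V ω) := by
  simp only [entOf, probEq_probEq]
  rw [sum_probEq_mul p V fun v => Real.logb 2 (probEq p (fun ω => A (V ω)) (A v))]

lemma condEntOf_probEq (p : Ω → ℝ) (V : Ω → Ω') (A : Ω' → α) (B : Ω' → β) :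
    condEntOf (probEq p V) A B = condEntOf p (fun ω => A (V ω)) fun ω => B (V ω) := by
  rw [condEntOf, condEntOf, entOf_probEq, entOf_probEq]

lemma crossEntOf_probEq (p : Ω → ℝ) (V : Ω → Ω') (A : Ω' → α) (q : α → ℝ) :
    crossEntOf (probEq p V) A q = crossEntOf p (fun ω => A (V ω)) q :=
  congrArg Neg.neg <| sum_probEq_mul p V fun v => Real.logb 2 (q (A v))

lemma relEntOf_probEq (p : Ω → ℝ) (V : Ω → Ω') (A : Ω' → α) (q : α → ℝ) :
    relEntOf (probEq p V) A q = relEntOf p (fun ω => A (V ω)) q := by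
  rw [relEntOf, relEntOf, crossEntOf_probEq, entOf_probEq]

lemma condMIOf_eq_condEntOf_sub (p : Ω → ℝ) (A : Ω → α) (B : Ω → β) (C : Ω → γ) :
    condMIOf p A B C = condEntOf p A C - condEntOf p A fun ω => (B ω, C ω) := by
  have hassoc : entOf p (fun ω => ((A ω, B ω), C ω)) = entOf p fun ω => (A ω, B ω, C ω) :=
    entOf_congr p fun ω ω' => by simp only [Prod.mk.injEq, and_assoc]
  simp only [condMIOf, condEntOf, hassoc]
  ring

lemma condMIOf_comm (p : Ω → ℝ) (A : Ω → α) (B : Ω → β) (C : Ω → γ) :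
    condMIOf p A B C = condMIOf p B A C := by
  have hswap : entOf p (fun ω => ((A ω, B ω), C ω)) = entOf p fun ω => ((B ω, A ω), C ω) :=
    entOf_congr p fun ω ω' => by simp only [Prod.mk.injEq, and_comm]
  simp only [condMIOf, condEntOf, hswap]
  ring

/-- The joint law of `((A, B), C)` in which `A` and `B` are made conditionally independent given
`C`, keeping the laws of `(A, C)` and `(B, C)`: `P(a, c) P(b, c) / P(c)`. -/
def condIndepLaw (p : Ω → ℝ) (A : Ω → α) (B : Ω → β) (C : Ω → γ) (t : (α × β) × γ) : ℝ :=
  probEq p (fun ω => (A ω, C ω)) (t.1.1, t.2) * probEq p (fun ω => (B ω, C ω)) (t.1.2, t.2) /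
    probEq p C t.2

variable {p : Ω → ℝ}

lemma condIndepLaw_nonneg (hp : ∀ ω, 0 ≤ p ω) (A : Ω → α) (B : Ω → β) (C : Ω → γ)
    (t : (α × β) × γ) : 0 ≤ condIndepLaw p A B C t :=
  div_nonneg (mul_nonneg (probEq_nonneg hp _ _) (probEq_nonneg hp _ _)) (probEq_nonneg hp _ _)

lemma condIndepLaw_pos (hp : ∀ ω, 0 ≤ p ω) (A : Ω → α) (B : Ω → β) (C : Ω → γ) {ω : Ω}
    (hω : 0 < p ω) : 0 < condIndepLaw p A B C ((A ω, B ω), C ω) :=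
  div_pos (mul_pos (probEq_pos hp (fun ω => (A ω, C ω)) hω)
    (probEq_pos hp (fun ω => (B ω, C ω)) hω)) (probEq_pos hp C hω)

lemma sum_condIndepLaw [Fintype α] [Fintype β] [Fintype γ] (p : Ω → ℝ) (A : Ω → α)
    (B : Ω → β) (C : Ω → γ) : ∑ t, condIndepLaw p A B C t = ∑ ω, p ω := by
  rw [Fintype.sum_prod_type_right, ← sum_probEq p C]
  refine Finset.sum_congr rfl fun c _ => ?_
  simp only [Fintype.sum_prod_type, condIndepLaw]
  simp only [← Finset.sum_div, ← Finset.mul_sum, ← Finset.sum_mul, sum_probEq_prodMk_left]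
  exact mul_self_div_self (probEq p C c)

lemma condMIOf_eq_relEntOf (hp : ∀ ω, 0 ≤ p ω) (A : Ω → α) (B : Ω → β) (C : Ω → γ) :
    condMIOf p A B C = relEntOf p (fun ω => ((A ω, B ω), C ω)) (condIndepLaw p A B C) := by
  have hcross : crossEntOf p (fun ω => ((A ω, B ω), C ω)) (condIndepLaw p A B C) =
      entOf p (fun ω => (A ω, C ω)) + entOf p (fun ω => (B ω, C ω)) - entOf p C := by
    simp only [crossEntOf, entOf]
    rw [← neg_add, neg_sub_neg, ← Finset.sum_add_distrib, ← Finset.sum_sub_distrib,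
      ← Finset.sum_neg_distrib]
    refine Finset.sum_congr rfl fun ω _ => ?_
    rcases (hp ω).eq_or_lt with h0 | hω
    · simp [← h0]
    · have hAC := probEq_pos hp (fun ω => (A ω, C ω)) hω
      have hBC := probEq_pos hp (fun ω => (B ω, C ω)) hω
      rw [condIndepLaw, Real.logb_div (mul_pos hAC hBC).ne' (probEq_pos hp C hω).ne',
        Real.logb_mul hAC.ne' hBC.ne']
      ring
  rw [relEntOf, hcross, condMIOf, condEntOf, condEntOf, condEntOf]
  ring

section Submodularity

variable [Finite α] [Finite β] [Finite γ]

lemma condMIOf_nonneg (hp : ∀ ω, 0 ≤ p ω) (A : Ω → α) (B : Ω → β) (C : Ω → γ) :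
    0 ≤ condMIOf p A B C := by
  cases nonempty_fintype α
  cases nonempty_fintype β
  cases nonempty_fintype γ
  rw [condMIOf_eq_relEntOf hp]
  exact relEntOf_nonneg hp (condIndepLaw_nonneg hp A B C) (sum_condIndepLaw p A B C).le
    fun _ => condIndepLaw_pos hp A B C

lemma probEq_mul_probEq_of_condMIOf_eq_zero (hp : ∀ ω, 0 ≤ p ω) {A : Ω → α} {B : Ω → β}
    {C : Ω → γ} (h : condMIOf p A B C = 0) {ω : Ω} (hω : 0 < p ω) :
    probEq p (fun ω => ((A ω, B ω), C ω)) ((A ω, B ω), C ω) * probEq p C (C ω) =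
      probEq p (fun ω => (A ω, C ω)) (A ω, C ω) * probEq p (fun ω => (B ω, C ω)) (B ω, C ω) := by
  cases nonempty_fintype α
  cases nonempty_fintype β
  cases nonempty_fintype γ
  rw [condMIOf_eq_relEntOf hp] at h
  have heq := probEq_eq_of_relEntOf_eq_zero hp (condIndepLaw_nonneg hp A B C)
    (sum_condIndepLaw p A B C).le (fun _ => condIndepLaw_pos hp A B C) h hω
  rwa [condIndepLaw, eq_div_iff (probEq_pos hp C hω).ne'] at heq

lemma condEntOf_le_of_determines (hp : ∀ ω, 0 ≤ p ω) (A : Ω → α) {B : Ω → β} {C : Ω → γ}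
    (h : ∀ ω ω', B ω = B ω' → C ω = C ω') : condEntOf p A B ≤ condEntOf p A C := by
  have hB : condEntOf p A (fun ω => (B ω, C ω)) = condEntOf p A B :=
    condEntOf_congr p A fun ω ω' => by
      simpa only [Prod.mk.injEq, and_iff_left_iff_imp] using h ω ω'
  linarith [condMIOf_nonneg hp A B C, condMIOf_eq_condEntOf_sub p A B C]

end Submodularity

lemma entOf_const (hp : IsPMF p) (a : α) : entOf p (fun _ => a) = 0 := by
  simp [entOf, probEq, hp.2]

lemma condEntOf_le_entOf [Finite α] [Finite β] (hp : IsPMF p) (A : Ω → α) (B : Ω → β) :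
    condEntOf p A B ≤ entOf p A := by
  have hunit : condEntOf p A (fun _ => ()) = entOf p A := by
    rw [condEntOf, entOf_const hp, sub_zero]
    exact entOf_congr p fun ω ω' => by simp
  exact hunit ▸ condEntOf_le_of_determines hp.1 A fun _ _ _ => rfl

lemma entOf_const_mul (c : ℝ) (hp : ∀ ω, 0 ≤ p ω) (A : Ω → α) :
    entOf (fun ω => c * p ω) A = c * entOf p A - c * Real.logb 2 c * ∑ ω, p ω := by
  rcases eq_or_ne c 0 with rfl | hc
  · simp [entOf]
  simp only [entOf, probEq_const_mul]
  rw [mul_neg, Finset.mul_sum, Finset.mul_sum, ← neg_add', ← Finset.sum_add_distrib]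
  refine congrArg Neg.neg (Finset.sum_congr rfl fun ω _ => ?_)
  rcases (hp ω).eq_or_lt with h0 | hω
  · simp [← h0]
  · rw [Real.logb_mul hc (probEq_pos hp A hω).ne']
    ring

lemma condEntOf_const_mul (c : ℝ) (hp : ∀ ω, 0 ≤ p ω) (A : Ω → α) (B : Ω → β) :
    condEntOf (fun ω => c * p ω) A B = c * condEntOf p A B := by
  rw [condEntOf, condEntOf, entOf_const_mul c hp, entOf_const_mul c hp]
  ring

lemma entOf_prodMk_fst {U V : Type*} [Fintype U] [Fintype V] (q : U × V → ℝ) (A : U → V → α) :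
    entOf q (fun t => (A t.1 t.2, t.1)) = ∑ u, entOf (fun v => q (u, v)) (A u) := by
  classical
  have hslice : ∀ u a, probEq q (fun t => (A t.1 t.2, t.1)) (a, u) =
      probEq (fun v => q (u, v)) (A u) a := fun u a => by
    rw [probEq, Fintype.sum_prod_type, Finset.sum_eq_single u (by simp +contextual) (by simp)]
    simp [probEq]
  simp only [entOf, hslice, Fintype.sum_prod_type, Finset.sum_neg_distrib]

lemma condEntOf_prodMk_fst {U V : Type*} [Fintype U] [Fintype V] (q : U × V → ℝ)
    (A : U → V → α) (B : U → V → β) :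
    condEntOf q (fun t => A t.1 t.2) (fun t => (B t.1 t.2, t.1)) =
      ∑ u, condEntOf (fun v => q (u, v)) (A u) (B u) := by
  have hassoc : entOf q (fun t => (A t.1 t.2, B t.1 t.2, t.1)) =
      entOf q fun t => ((A t.1 t.2, B t.1 t.2), t.1) :=
    entOf_congr q fun t t' => by simp only [Prod.mk.injEq, and_assoc]
  rw [condEntOf, hassoc, entOf_prodMk_fst q fun u v => (A u v, B u v), entOf_prodMk_fst q B,
    ← Finset.sum_sub_distrib]
  rfl

lemma condEntOf_fst {U V : Type*} [Fintype U] [Fintype V] (q : U × V → ℝ) (A : U → V → α) :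
    condEntOf q (fun t => A t.1 t.2) Prod.fst =
      ∑ u, condEntOf (fun v => q (u, v)) (A u) fun _ => () := by
  rw [← condEntOf_prodMk_fst q A fun _ _ => ()]
  exact condEntOf_congr q _ fun t t' => by simp

lemma continuous_probEq (A : Ω → α) (a : α) : Continuous fun p : Ω → ℝ => probEq p A a := by
  classical
  refine continuous_finsetSum _ fun ω _ => ?_
  split_ifs
  exacts [continuous_apply ω, continuous_const]

lemma continuous_entOf [Finite α] (A : Ω → α) : Continuous fun p : Ω → ℝ => entOf p A := by
  cases nonempty_fintype α
  have hneg : (fun p : Ω → ℝ => entOf p A) =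
      fun p => ∑ a, Real.negMulLog (probEq p A a) / Real.log 2 := by
    funext p
    rw [entOf, ← sum_probEq_mul p A fun a => Real.logb 2 (probEq p A a),
      ← Finset.sum_neg_distrib]
    refine Finset.sum_congr rfl fun a _ => ?_
    rw [Real.negMulLog, Real.logb]
    ring
  rw [hneg]
  exact continuous_finsetSum _ fun a _ =>
    (Real.continuous_negMulLog.comp (continuous_probEq A a)).div_const _

lemma continuous_condEntOf [Finite α] [Finite β] (A : Ω → α) (B : Ω → β) :
    Continuous fun p : Ω → ℝ => condEntOf p A B :=
  (continuous_entOf _).sub (continuous_entOf B)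

lemma continuous_condMIOf [Finite α] [Finite β] [Finite γ] (A : Ω → α) (B : Ω → β)
    (C : Ω → γ) : Continuous fun p : Ω → ℝ => condMIOf p A B C :=
  ((continuous_condEntOf A C).add (continuous_condEntOf B C)).sub (continuous_condEntOf _ C)

lemma continuous_relEntOf [Finite α] (A : Ω → α) (q : α → ℝ) :
    Continuous fun p : Ω → ℝ => relEntOf p A q := by
  unfold relEntOf crossEntOf
  exact (continuous_finsetSum _ fun ω _ => (continuous_apply ω).mul_const _).neg.sub
    (continuous_entOf A)

end ConditionalEntropy

section Caratheodory

lemma linearIndependent_of_affineIndependent_of_map_eq_one {𝕜 E ι : Type*} [Ring 𝕜]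
    [AddCommGroup E] [Module 𝕜 E] {z : ι → E} (hz : AffineIndependent 𝕜 z) (f : E →ₗ[𝕜] 𝕜)
    (hf : ∀ i, f (z i) = 1) : LinearIndependent 𝕜 z := by
  refine linearIndependent_iff'.2 fun s c hc => affineIndependent_iff.1 hz s c ?_ hc
  simpa [hf] using congrArg f hc

lemma exists_fin_sum_smul_eq_of_mem_convexHull {𝕜 E : Type*} [Field 𝕜] [LinearOrder 𝕜]
    [IsStrictOrderedRing 𝕜] [AddCommGroup E] [Module 𝕜 E] [FiniteDimensional 𝕜 E]
    {s : Set E} {x : E} (hx : x ∈ convexHull 𝕜 s) (f : E →ₗ[𝕜] 𝕜) (hf : ∀ z ∈ s, f z = 1)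
    {K : ℕ} (hK : Module.finrank 𝕜 E ≤ K) :
    ∃ (z : Fin K → E) (w : Fin K → 𝕜), (∀ k, z k ∈ s) ∧ (∀ k, 0 ≤ w k) ∧
      ∑ k, w k • z k = x := by
  obtain ⟨z₀, hz₀⟩ := convexHull_nonempty_iff.1 ⟨x, hx⟩
  obtain ⟨ι, _, z, w, hzs, hind, hw, -, hsum⟩ := eq_pos_convex_span_of_mem_convexHull hx
  have hzs : ∀ i, z i ∈ s := fun i => hzs (Set.mem_range_self i)
  have hcard : Fintype.card ι ≤ Fintype.card (Fin K) := by
    rw [Fintype.card_fin]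
    exact (linearIndependent_of_affineIndependent_of_map_eq_one hind f fun i =>
      hf _ (hzs i)).fintype_card_le_finrank.trans hK
  obtain ⟨e⟩ := Function.Embedding.nonempty_of_card_le hcard
  refine ⟨Function.extend e z fun _ => z₀, Function.extend e w 0, fun k => ?_, fun k => ?_, ?_⟩
  · by_cases hk : ∃ i, e i = k
    · obtain ⟨i, rfl⟩ := hk
      simpa [e.injective.extend_apply] using hzs i
    · simpa [Function.extend_apply' _ _ _ hk] using hz₀
  · by_cases hk : ∃ i, e i = k
    · obtain ⟨i, rfl⟩ := hk
      simpa [e.injective.extend_apply] using (hw i).le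
    · simp [Function.extend_apply' _ _ _ hk]
  · rw [← hsum]
    refine (Fintype.sum_of_injective e e.injective _ _ (fun k hk => ?_) fun i => ?_).symm
    · simp [Function.extend_apply' _ _ _ hk]
    · simp [e.injective.extend_apply]

lemma exists_fin_mixture {U V : Type*} [Fintype U] [Fintype V] {g : (V → ℝ) → ℝ}
    (hg : ∀ (c : ℝ) (s : V → ℝ), (∀ v, 0 ≤ s v) → g (fun v => c * s v) = c * g s)
    {q : U × V → ℝ} (hq : IsPMF q) :
    ∃ q' : Fin (Fintype.card V + 1) × V → ℝ, (∀ t, 0 ≤ q' t) ∧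
      (∀ v, probEq q' Prod.snd v = probEq q Prod.snd v) ∧
      ∑ k, g (fun v => q' (k, v)) = ∑ u, g fun v => q (u, v) := by
  have : Nonempty V := hq.nonempty.map Prod.snd
  obtain ⟨κ, hκ, hqκ⟩ := exists_isPMF_eq_sum_mul (fun u v => q (u, v)) fun u v => hq.1 (u, v)
  set S : Set ((V → ℝ) × ℝ) := (fun s => (s, g s)) '' {s | IsPMF s}
  have hmem : ∑ u, (∑ v, q (u, v)) • (κ u, g (κ u)) ∈ convexHull ℝ S :=
    (convex_convexHull ℝ S).sum_mem (fun u _ => Finset.sum_nonneg fun v _ => hq.1 (u, v))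
      (by rw [← Fintype.sum_prod_type, hq.2])
      fun u _ => subset_convexHull ℝ S ⟨κ u, hκ u, rfl⟩
  obtain ⟨z, w, hz, hw, hzw⟩ := exists_fin_sum_smul_eq_of_mem_convexHull hmem
    ((∑ v, LinearMap.proj v) ∘ₗ LinearMap.fst ℝ (V → ℝ) ℝ)
    (by rintro _ ⟨s, hs, rfl⟩; simpa using hs.2) (K := Fintype.card V + 1) (by simp)
  choose s hs hsz using hz
  simp only [← hsz, Prod.ext_iff, Prod.fst_sum, Prod.snd_sum, Prod.smul_fst, Prod.smul_snd,
    smul_eq_mul, funext_iff, Finset.sum_apply, Pi.smul_apply] at hzw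
  refine ⟨fun t => w t.1 * s t.1 t.2, fun t => mul_nonneg (hw _) ((hs _).1 _), fun v => ?_, ?_⟩
  · rw [probEq_snd, probEq_snd]
    exact (hzw.1 v).trans (Finset.sum_congr rfl fun u _ => (hqκ u v).symm)
  · simp only [hg _ _ (hs _).1, hzw.2]
    refine Finset.sum_congr rfl fun u _ => ?_
    rw [← hg _ _ (hκ u).1]
    exact congrArg g (funext fun v => (hqκ u v).symm)

end Caratheodory

section TestChannels

variable {U X Y Z : Type*} [Fintype U] [Fintype X] [Fintype Y] [Fintype Z]

/-- The rate `I(X;U|Y)` of a joint law of `(U, X, Y, Z)`. -/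
def auxRate (q : U × X × Y × Z → ℝ) : ℝ :=
  condMIOf q (fun t => t.2.1) (fun t => t.1) fun t => t.2.2.1

/-- The amount `I(Y;U|X) + I(X;Z|Y,U)` by which a joint law of `(U, X, Y, Z)` violates the Markov
chains `U - X - Y` and `X - (Y, U) - Z`. -/
def markovDefect (q : U × X × Y × Z → ℝ) : ℝ :=
  condMIOf q (fun t => t.2.2.1) (fun t => t.1) (fun t => t.2.1) +
    condMIOf q (fun t => t.2.1) (fun t => t.2.2.2) fun t => (t.2.2.1, t.1)

/-- A joint law of `(U, X, Y, Z)` that meets the constraints of the single-letter converse up to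
the slack `δ`. The source law is compared with `P` through relative entropy, which requires the
separate support condition because `Real.logb 2 0 = 0`. -/
structure IsApproxTestChannel (P : X × Y → ℝ) (d : X → Z → ℝ) (D R δ : ℝ)
    (q : U × X × Y × Z → ℝ) : Prop where
  isPMF : IsPMF q
  eq_zero_of_source_eq_zero : ∀ t, P (t.2.1, t.2.2.1) = 0 → q t = 0
  auxRate_le : auxRate q ≤ R + δ
  markovDefect_le : markovDefect q ≤ δ
  relEntOf_source_le : relEntOf q (fun t => (t.2.1, t.2.2.1)) P ≤ δ
  distortion_le : ∑ t, q t * d t.2.1 t.2.2.2 ≤ D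

/-- A joint law of `(U, X, Y, Z)` with source law `P`, rate `I(X;U|Y) ≤ R` and expected distortion
at most `D`, in which `U - X - Y` and `X - (Y, U) - Z` are Markov chains. -/
structure IsTestChannel (P : X × Y → ℝ) (d : X → Z → ℝ) (D R : ℝ)
    (q : U × X × Y × Z → ℝ) : Prop where
  isPMF : IsPMF q
  source_eq : ∀ x y, probEq q (fun t => (t.2.1, t.2.2.1)) (x, y) = P (x, y)
  auxRate_le : auxRate q ≤ R
  condMIOf_side_aux : condMIOf q (fun t => t.2.2.1) (fun t => t.1) (fun t => t.2.1) = 0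
  condMIOf_source_reproduction :
    condMIOf q (fun t => t.2.1) (fun t => t.2.2.2) (fun t => (t.2.2.1, t.1)) = 0
  distortion_le : ∑ t, q t * d t.2.1 t.2.2.2 ≤ D

lemma auxRate_nonneg {q : U × X × Y × Z → ℝ} (hq : ∀ t, 0 ≤ q t) : 0 ≤ auxRate q :=
  condMIOf_nonneg hq _ _ _

lemma markovDefect_nonneg {q : U × X × Y × Z → ℝ} (hq : ∀ t, 0 ≤ q t) : 0 ≤ markovDefect q :=
  add_nonneg (condMIOf_nonneg hq _ _ _) (condMIOf_nonneg hq _ _ _)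

lemma auxRate_eq (q : U × X × Y × Z → ℝ) :
    auxRate q = condEntOf q (fun t => t.2.1) (fun t => t.2.2.1) -
      condEntOf q (fun t => t.2.1) fun t => (t.2.2.1, t.1) := by
  rw [auxRate, condMIOf_eq_condEntOf_sub]
  exact congrArg _ (condEntOf_congr q _ fun t t' => by simp only [Prod.mk.injEq, and_comm])

lemma markovDefect_eq (q : U × X × Y × Z → ℝ) :
    markovDefect q = condEntOf q (fun t => t.2.2.1) (fun t => t.2.1) +
      (condEntOf q (fun t => t.2.1) (fun t => t.1) -
        condEntOf q (fun t => t.2.2.1) fun t => t.1) -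
      condEntOf q (fun t => t.2.1) fun t => ((t.2.2.2, t.2.2.1), t.1) := by
  have hcomm : condEntOf q (fun t => t.2.2.1) (fun t => (t.1, t.2.1)) =
      condEntOf q (fun t => t.2.2.1) fun t => (t.2.1, t.1) :=
    condEntOf_congr q _ fun t t' => by simp only [Prod.mk.injEq, and_comm]
  have hassoc : condEntOf q (fun t => t.2.1) (fun t => (t.2.2.2, t.2.2.1, t.1)) =
      condEntOf q (fun t => t.2.1) fun t => ((t.2.2.2, t.2.2.1), t.1) :=
    condEntOf_congr q _ fun t t' => by simp only [Prod.mk.injEq, and_assoc]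
  have hswap := condMIOf_comm q (fun t => t.2.1) (fun t => t.2.2.1) fun t => t.1
  rw [condMIOf_eq_condEntOf_sub, condMIOf_eq_condEntOf_sub] at hswap
  rw [markovDefect, condMIOf_eq_condEntOf_sub, condMIOf_eq_condEntOf_sub, hcomm, hassoc]
  linarith

/-- The part of the Lagrangian `l * markovDefect + auxRate` contributed by one letter of the
auxiliary alphabet, as a function of the (unnormalised) law of `(X, Y, Z)` on that letter.
Conditioning on `()` makes the entropies of the unnormalised law homogeneous. -/
def lagrangianSection (l : ℝ) (s : X × Y × Z → ℝ) : ℝ :=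
  l * (condEntOf s (fun v => v.1) (fun _ => ()) - condEntOf s (fun v => v.2.1) (fun _ => ()) -
    condEntOf s (fun v => v.1) fun v => (v.2.2, v.2.1)) -
      condEntOf s (fun v => v.1) fun v => v.2.1

lemma lagrangianSection_const_mul (l c : ℝ) {s : X × Y × Z → ℝ} (hs : ∀ v, 0 ≤ s v) :
    lagrangianSection l (fun v => c * s v) = c * lagrangianSection l s := by
  simp only [lagrangianSection, condEntOf_const_mul c hs]
  ring

lemma lagrangian_eq_sum_sections (l : ℝ) (q : U × X × Y × Z → ℝ) :
    l * markovDefect q + auxRate q =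
      l * condEntOf (probEq q Prod.snd) (fun v => v.2.1) (fun v => v.1) +
        condEntOf (probEq q Prod.snd) (fun v => v.1) (fun v => v.2.1) +
        ∑ u, lagrangianSection l fun v => q (u, v) := by
  have hX := condEntOf_fst q fun _ v => v.1
  have hY := condEntOf_fst q fun _ v => v.2.1
  have hXZY := condEntOf_prodMk_fst q (fun _ v => v.1) fun _ v => (v.2.2, v.2.1)
  have hXY := condEntOf_prodMk_fst q (fun _ v => v.1) fun _ v => v.2.1
  simp only [lagrangianSection, Finset.sum_sub_distrib, ← Finset.mul_sum]
  rw [condEntOf_probEq, condEntOf_probEq, markovDefect_eq, auxRate_eq, ← hX, ← hY, ← hXZY, ← hXY]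
  ring

-- Preserving `markovDefect` and `auxRate` separately would cost one more letter than the bound
-- allows; preserving a single Lagrangian is enough because both terms are nonnegative.
lemma exists_fin_lagrangian_eq (l : ℝ) {q : U × X × Y × Z → ℝ} (hq : IsPMF q) :
    ∃ q' : Fin (Fintype.card (X × Y × Z) + 1) × X × Y × Z → ℝ, IsPMF q' ∧
      probEq q' Prod.snd = probEq q Prod.snd ∧
      l * markovDefect q' + auxRate q' = l * markovDefect q + auxRate q := by
  obtain ⟨q', hq', hmarg, hsum⟩ := exists_fin_mixture
    (fun c s hs => lagrangianSection_const_mul l c hs) hq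
  have hmarg : probEq q' Prod.snd = probEq q Prod.snd := funext hmarg
  refine ⟨q', ⟨hq', ?_⟩, hmarg, ?_⟩
  · rw [← sum_probEq q' Prod.snd, hmarg, sum_probEq, hq.2]
  · rw [lagrangian_eq_sum_sections, hsum, hmarg, ← lagrangian_eq_sum_sections]

variable {P : X × Y → ℝ} {d : X → Z → ℝ} {D R : ℝ}

lemma IsApproxTestChannel.exists_fin {η δ l : ℝ} {q : U × X × Y × Z → ℝ}
    (hq : IsApproxTestChannel P d D R η q) (hl : 0 < l) (hη : (1 + l) * η ≤ δ)
    (hδ : R + δ ≤ l * δ) :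
    ∃ q' : Fin (Fintype.card (X × Y × Z) + 1) × X × Y × Z → ℝ,
      IsApproxTestChannel P d D R δ q' := by
  obtain ⟨q', hq', hmarg, hlag⟩ := exists_fin_lagrangian_eq l hq.isPMF
  have hrate := auxRate_nonneg hq'.1
  have hdefect := markovDefect_nonneg hq'.1
  have hη0 : 0 ≤ η := (markovDefect_nonneg hq.isPMF.1).trans hq.markovDefect_le
  have hle : l * markovDefect q' + auxRate q' ≤ R + δ := by
    rw [hlag]
    nlinarith [hq.auxRate_le, mul_le_mul_of_nonneg_left hq.markovDefect_le hl.le]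
  refine ⟨q', hq', fun t ht => ?_, ?_, ?_, ?_, ?_⟩
  · refine le_antisymm ((apply_le_probEq hq'.1 Prod.snd t).trans_eq ?_) (hq'.1 t)
    rw [hmarg]
    exact probEq_eq_zero fun t' ht' => hq.eq_zero_of_source_eq_zero t' (by rwa [ht'])
  · nlinarith
  · exact le_of_mul_le_mul_left (by linarith) hl
  · rw [← relEntOf_probEq q' Prod.snd (fun v => (v.1, v.2.1)) P, hmarg, relEntOf_probEq]
    nlinarith [hq.relEntOf_source_le]
  · rw [← sum_probEq_mul q' Prod.snd fun v => d v.1 v.2.2, hmarg, sum_probEq_mul]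
    exact hq.distortion_le

lemma IsApproxTestChannel.of_tendsto {ι : Type*} {F : Filter ι} [F.NeBot] {δ : ι → ℝ} {δ₀ : ℝ}
    {q : ι → U × X × Y × Z → ℝ} {q₀ : U × X × Y × Z → ℝ}
    (hq : ∀ i, IsApproxTestChannel P d D R (δ i) (q i)) (hδ : Tendsto δ F (nhds δ₀))
    (hlim : Tendsto q F (nhds q₀)) : IsApproxTestChannel P d D R δ₀ q₀ := by
  have hcont : ∀ {f : (U × X × Y × Z → ℝ) → ℝ}, Continuous f →
      Tendsto (fun i => f (q i)) F (nhds (f q₀)) := fun hf => (hf.tendsto q₀).comp hlim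
  constructor
  case isPMF =>
    exact (isClosed_stdSimplex ℝ (U × X × Y × Z)).mem_of_tendsto hlim
      (.of_forall fun i => (hq i).isPMF)
  case eq_zero_of_source_eq_zero =>
    refine fun t ht => tendsto_nhds_unique (hcont (continuous_apply t)) ?_
    simpa only [(hq _).eq_zero_of_source_eq_zero t ht] using tendsto_const_nhds
  case auxRate_le =>
    exact le_of_tendsto_of_tendsto' (hcont (continuous_condMIOf _ _ _)) (hδ.const_add R)
      fun i => (hq i).auxRate_le
  case markovDefect_le =>
    exact le_of_tendsto_of_tendsto'
      (hcont ((continuous_condMIOf _ _ _).add (continuous_condMIOf _ _ _))) hδ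
      fun i => (hq i).markovDefect_le
  case relEntOf_source_le =>
    exact le_of_tendsto_of_tendsto' (hcont (continuous_relEntOf _ P)) hδ
      fun i => (hq i).relEntOf_source_le
  case distortion_le =>
    exact le_of_tendsto' (hcont (f := fun q => ∑ t, q t * d t.2.1 t.2.2.2) (by fun_prop))
      fun i => (hq i).distortion_le

lemma exists_isApproxTestChannel_zero
    (h : ∀ δ > 0, ∃ q : U × X × Y × Z → ℝ, IsApproxTestChannel P d D R δ q) :
    ∃ q : U × X × Y × Z → ℝ, IsApproxTestChannel P d D R 0 q := by
  choose q hq using fun n : ℕ => h (1 / (n + 1)) Nat.one_div_pos_of_nat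
  obtain ⟨q₀, -, φ, hφ, hlim⟩ := (isCompact_stdSimplex ℝ (U × X × Y × Z)).tendsto_subseq
    fun n => (hq n).isPMF
  exact ⟨q₀, .of_tendsto (fun n => hq (φ n))
    (tendsto_one_div_add_atTop_nhds_zero_nat.comp hφ.tendsto_atTop) hlim⟩

lemma IsApproxTestChannel.isTestChannel {q : U × X × Y × Z → ℝ} (hP : IsPMF P)
    (hq : IsApproxTestChannel P d D R 0 q) : IsTestChannel P d D R q := by
  have hside := condMIOf_nonneg hq.isPMF.1 (fun t => t.2.2.1) (fun t => t.1) (fun t => t.2.1)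
  have hrepr := condMIOf_nonneg hq.isPMF.1 (fun t => t.2.1) (fun t => t.2.2.2)
    (fun t => (t.2.2.1, t.1))
  have hdefect : _ + _ ≤ (0 : ℝ) := hq.markovDefect_le
  have hpos : ∀ t, 0 < q t → 0 < P (t.2.1, t.2.2.1) := fun t ht =>
    (hP.1 _).lt_of_ne' fun h0 => ht.ne' (hq.eq_zero_of_source_eq_zero t h0)
  have hsum : ∑ xy, P xy ≤ ∑ t, q t := (hP.2.trans hq.isPMF.2.symm).le
  have hsource : probEq q (fun t => (t.2.1, t.2.2.1)) = P := by
    refine (hq.isPMF.probEq _).eq_of_forall_pos hP fun xy hxy => ?_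
    obtain ⟨t, rfl, ht⟩ := exists_pos_of_probEq_pos hxy
    exact probEq_eq_of_relEntOf_eq_zero hq.isPMF.1 hP.1 hsum hpos
      (hq.relEntOf_source_le.antisymm (relEntOf_nonneg hq.isPMF.1 hP.1 hsum hpos)) ht
  exact ⟨hq.isPMF, fun x y => congrFun hsource (x, y), by simpa using hq.auxRate_le,
    by linarith, by linarith, hq.distortion_le⟩

end TestChannels

section Rmin

variable {U X Y Z : Type*} [Fintype U] [Fintype X] [Fintype Y] [Fintype Z]
  {P : X × Y → ℝ} {d : X → Z → ℝ} {D R : ℝ}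

/-- The joint law `P_{U|X} · P_{XY} · P_{Z|UY}` over which `RminSet` ranges. -/
def markovLaw (P : X × Y → ℝ) (PU : X → U → ℝ) (PZ : U × Y → Z → ℝ) (t : U × X × Y × Z) : ℝ :=
  PU t.2.1 t.1 * P (t.2.1, t.2.2.1) * PZ (t.1, t.2.2.1) t.2.2.2

lemma isPMF_markovLaw (hP : IsPMF P) {PU : X → U → ℝ} {PZ : U × Y → Z → ℝ}
    (hPU : ∀ x, IsPMF (PU x)) (hPZ : ∀ uy, IsPMF (PZ uy)) : IsPMF (markovLaw P PU PZ) := by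
  refine ⟨fun t => mul_nonneg (mul_nonneg ((hPU _).1 _) (hP.1 _)) ((hPZ _).1 _), ?_⟩
  simp only [markovLaw, Fintype.sum_prod_type, ← Finset.mul_sum, (hPZ _).2, mul_one]
  rw [Finset.sum_comm]
  simp only [← Finset.sum_mul, (hPU _).2, one_mul]
  rw [← hP.2, Fintype.sum_prod_type]

lemma bddBelow_RminSet (hP : IsPMF P) (d : X → Z → ℝ) (D : ℝ) : BddBelow (RminSet P d D) := by
  refine ⟨0, ?_⟩
  rintro _ ⟨m, PU, PZ, hPU, hPZ, -, rfl⟩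
  exact condMIOf_nonneg (isPMF_markovLaw hP hPU hPZ).1 _ _ _

lemma IsTestChannel.apply_mul_mul_eq {q : U × X × Y × Z → ℝ} (hq : IsTestChannel P d D R q)
    {u : U} {x : X} {y : Y} {z : Z} (ht : 0 < q (u, x, y, z)) :
    q (u, x, y, z) * (probEq q (fun t => t.2.1) x * probEq q (fun t => (t.2.2.1, t.1)) (y, u)) =
      probEq q (fun t => (t.1, t.2.1)) (u, x) * P (x, y) *
        probEq q (fun t => (t.2.2.2, t.2.2.1, t.1)) (z, y, u) := by
  have hUXY := probEq_mul_probEq_of_condMIOf_eq_zero hq.isPMF.1 hq.condMIOf_side_aux ht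
  have hXYUZ :=
    probEq_mul_probEq_of_condMIOf_eq_zero hq.isPMF.1 hq.condMIOf_source_reproduction ht
  dsimp only at hUXY hXYUZ
  rw [probEq_congr q (A := fun t => ((t.2.1, t.2.2.2), t.2.2.1, t.1)) (B := id) (b := (u, x, y, z))
    (fun t => by simp only [Prod.ext_iff, id]; tauto), probEq_id] at hXYUZ
  rw [probEq_congr q (A := fun t => (t.2.2.1, t.2.1)) (B := fun t => (t.2.1, t.2.2.1)) (b := (x, y))
      (fun t => by simp only [Prod.mk.injEq, and_comm]), hq.source_eq,
    probEq_congr q (A := fun t => ((t.2.2.1, t.1), t.2.1)) (B := fun t => (t.2.1, t.2.2.1, t.1))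
      (b := (x, y, u)) (fun t => by simp only [Prod.mk.injEq]; tauto)] at hUXY
  linear_combination probEq q (fun t => t.2.1) x * hXYUZ +
    probEq q (fun t => (t.2.2.2, t.2.2.1, t.1)) (z, y, u) * hUXY

lemma IsTestChannel.exists_eq_markovLaw {q : U × X × Y × Z → ℝ} (hP : IsPMF P)
    (hq : IsTestChannel P d D R q) :
    ∃ (PU : X → U → ℝ) (PZ : U × Y → Z → ℝ), (∀ x, IsPMF (PU x)) ∧ (∀ uy, IsPMF (PZ uy)) ∧
      q = markovLaw P PU PZ := by
  obtain ⟨u₀, -, -, z₀⟩ := hq.isPMF.nonempty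
  have : Nonempty U := ⟨u₀⟩
  have : Nonempty Z := ⟨z₀⟩
  obtain ⟨PU, hPU, hqPU⟩ := exists_isPMF_eq_sum_mul
    (fun x u => probEq q (fun t => (t.1, t.2.1)) (u, x)) fun _ _ => probEq_nonneg hq.isPMF.1 _ _
  obtain ⟨PZ, hPZ, hqPZ⟩ := exists_isPMF_eq_sum_mul
    (fun (uy : U × Y) z => probEq q (fun t => (t.2.2.2, t.2.2.1, t.1)) (z, uy.2, uy.1))
    fun _ _ => probEq_nonneg hq.isPMF.1 _ _
  refine ⟨PU, PZ, hPU, hPZ, hq.isPMF.eq_of_forall_pos (isPMF_markovLaw hP hPU hPZ) ?_⟩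
  rintro ⟨u, x, y, z⟩ ht
  have hX := probEq_pos hq.isPMF.1 (fun t => t.2.1) ht
  have hYU := probEq_pos hq.isPMF.1 (fun t => (t.2.2.1, t.1)) ht
  have hfactor := hq.apply_mul_mul_eq ht
  rw [hqPU x u, hqPZ (u, y) z, sum_probEq_prodMk_left q (fun t => t.1),
    sum_probEq_prodMk_left q (fun t => t.2.2.2) fun t => (t.2.2.1, t.1)] at hfactor
  refine mul_right_cancel₀ (mul_pos hX hYU).ne' (hfactor.trans ?_)
  rw [markovLaw]
  ring

lemma Rmin_le_of_isTestChannel {m : ℕ} {q : Fin m × X × Y × Z → ℝ} (hP : IsPMF P)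
    (hq : IsTestChannel P d D R q) : Rmin P d D ≤ R := by
  obtain ⟨PU, PZ, hPU, hPZ, rfl⟩ := hq.exists_eq_markovLaw hP
  exact (csInf_le (bddBelow_RminSet hP d D) ⟨m, PU, PZ, hPU, hPZ, hq.distortion_le, rfl⟩).trans
    hq.auxRate_le

end Rmin

section TimeSharing

variable {ι Ω α β : Type*} [Fintype ι] {p : Ω → ℝ}

/-- The joint law of `(T, ω)` with `T` uniform on `ι` and independent of `ω ∼ p`. For a family `A`
of random variables, `fun t => A t.1 t.2` is then the time-shared variable `A_T`. -/
def timeShare (ι : Type*) [Fintype ι] (p : Ω → ℝ) (t : ι × Ω) : ℝ :=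
  (Fintype.card ι : ℝ)⁻¹ * p t.2

lemma timeShare_nonneg (hp : ∀ ω, 0 ≤ p ω) (t : ι × Ω) : 0 ≤ timeShare ι p t :=
  mul_nonneg (by positivity) (hp _)

lemma timeShare_pos_iff [Nonempty ι] {t : ι × Ω} : 0 < timeShare ι p t ↔ 0 < p t.2 :=
  mul_pos_iff_of_pos_left (inv_pos.2 (by exact_mod_cast Fintype.card_pos))

variable [Fintype Ω]

lemma card_mul_sum_timeShare_mul [Nonempty ι] (p : Ω → ℝ) (f : ι → Ω → ℝ) :
    Fintype.card ι * ∑ t, timeShare ι p t * f t.1 t.2 = ∑ ω, p ω * ∑ i, f i ω := by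
  have hcard : (Fintype.card ι : ℝ) ≠ 0 := by simp
  simp only [timeShare, mul_assoc, ← Finset.mul_sum]
  rw [mul_inv_cancel_left₀ hcard, Fintype.sum_prod_type_right]
  simp only [Finset.mul_sum]

lemma IsPMF.timeShare [Nonempty ι] (hp : IsPMF p) : IsPMF (timeShare ι p) := by
  have hcard : (Fintype.card ι : ℝ) ≠ 0 := by simp
  refine ⟨timeShare_nonneg hp.1, mul_left_cancel₀ hcard ?_⟩
  simpa [← Finset.sum_mul, hp.2] using card_mul_sum_timeShare_mul p fun (_ : ι) _ => 1

lemma card_mul_condEntOf_timeShare [Nonempty ι] (hp : ∀ ω, 0 ≤ p ω) (A : ι → Ω → α)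
    (B : ι → Ω → β) :
    Fintype.card ι * condEntOf (timeShare ι p) (fun t => A t.1 t.2) (fun t => (B t.1 t.2, t.1)) =
      ∑ i, condEntOf p (A i) (B i) := by
  have hcard : (Fintype.card ι : ℝ) ≠ 0 := by simp
  rw [condEntOf_prodMk_fst]
  simp only [timeShare, condEntOf_const_mul _ hp]
  rw [← Finset.mul_sum, mul_inv_cancel_left₀ hcard]

lemma crossEntOf_prod_eq_card_mul [Nonempty ι] (hp : ∀ ω, 0 ≤ p ω) (A : ι → Ω → α) {Q : α → ℝ}
    (hQ : ∀ ω, 0 < p ω → ∀ i, 0 < Q (A i ω)) :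
    crossEntOf p (fun ω i => A i ω) (fun w => ∏ i, Q (w i)) =
      Fintype.card ι * crossEntOf (timeShare ι p) (fun t => A t.1 t.2) Q := by
  rw [crossEntOf, crossEntOf, mul_neg,
    card_mul_sum_timeShare_mul p fun i ω => Real.logb 2 (Q (A i ω))]
  refine congrArg Neg.neg (Finset.sum_congr rfl fun ω _ => ?_)
  rcases (hp ω).eq_or_lt with h0 | hω
  · simp [← h0]
  · rw [Real.logb_prod _ _ fun i _ => (hQ ω hω i).ne']

lemma entOf_le_card_mul_entOf_timeShare [Nonempty ι] [Finite α] (hp : IsPMF p) (A : ι → Ω → α) :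
    entOf p (fun ω i => A i ω) ≤
      Fintype.card ι * entOf (timeShare ι p) (fun t => A t.1 t.2) := by
  classical
  cases nonempty_fintype α
  set Q := probEq (timeShare ι p) (fun t => A t.1 t.2)
  have hQ : IsPMF Q := hp.timeShare.probEq _
  have hpos : ∀ ω, 0 < p ω → ∀ i, 0 < Q (A i ω) := fun ω hω i =>
    probEq_pos hp.timeShare.1 (fun t => A t.1 t.2) (timeShare_pos_iff (t := (i, ω)).2 hω)
  calc entOf p (fun ω i => A i ω)
      ≤ crossEntOf p (fun ω i => A i ω) (fun w => ∏ i, Q (w i)) :=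
        entOf_le_crossEntOf hp.1 (fun w => Finset.prod_nonneg fun i _ => hQ.1 _)
          (by rw [← Fintype.prod_sum fun (_ : ι) a => Q a, hQ.2, hp.2, Finset.prod_const_one])
          fun ω hω => Finset.prod_pos fun i _ => hpos ω hω i
    _ = Fintype.card ι * crossEntOf (timeShare ι p) (fun t => A t.1 t.2) Q :=
        crossEntOf_prod_eq_card_mul hp.1 A hpos
    _ = Fintype.card ι * entOf (timeShare ι p) (fun t => A t.1 t.2) := rfl

end TimeSharing

section SingleLetterization

variable {X Y Z M : Type*} {n : ℕ}

/-- What has been observed of a pair of sequences when the first `a` source letters, the side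
information from position `b` on, and the message `φ x` are known. Unobserved positions hold
`none`, so that the alphabet depends on neither `a` nor `b`. -/
def partialObs (φ : (Fin n → X) → M) (a b : ℕ) (ω : (Fin n → X) × (Fin n → Y)) :
    (Fin n → Option X) × (Fin n → Option Y) × M :=
  (fun i => if i < a then some (ω.1 i) else none, fun i => if b ≤ i then some (ω.2 i) else none,
    φ ω.1)

/-- The letters `(U, X, Y, Z)` at a time index `t.1` of the block `t.2`: `U` consists of the past
of the source, the future of the side information, the message, and the time index itself. -/
def blockLetters (φ : (Fin n → X) → M) (g : M → (Fin n → Y) → Fin n → Z)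
    (t : Fin n × (Fin n → X) × (Fin n → Y)) :
    (((Fin n → Option X) × (Fin n → Option Y) × M) × Fin n) × X × Y × Z :=
  ((partialObs φ t.1 (t.1 + 1) t.2, t.1), t.2.1 t.1, t.2.2 t.1, g (φ t.2.1) t.2.2 t.1)

lemma partialObs_eq_iff {φ : (Fin n → X) → M} {a b : ℕ} {ω ω' : (Fin n → X) × (Fin n → Y)} :
    partialObs φ a b ω = partialObs φ a b ω' ↔
      (∀ i : Fin n, i < a → ω.1 i = ω'.1 i) ∧ (∀ i : Fin n, b ≤ i → ω.2 i = ω'.2 i) ∧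
        φ ω.1 = φ ω'.1 := by
  simp only [partialObs, Prod.mk.injEq, funext_iff]
  refine and_congr (forall_congr' fun i => ?_) (and_congr_left' (forall_congr' fun i => ?_)) <;>
    split_ifs <;> simp [*]

lemma fin_forall_lt_succ_iff {i : Fin n} {s : Fin n → Prop} :
    (∀ j : Fin n, (j : ℕ) < i + 1 → s j) ↔ s i ∧ ∀ j : Fin n, (j : ℕ) < i → s j := by
  simp only [Nat.lt_succ_iff, le_iff_eq_or_lt, Fin.val_inj, or_imp, forall_and, forall_eq]

lemma fin_forall_ge_iff {i : Fin n} {s : Fin n → Prop} :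
    (∀ j : Fin n, (i : ℕ) ≤ j → s j) ↔ s i ∧ ∀ j : Fin n, (i : ℕ) + 1 ≤ j → s j := by
  refine ⟨fun h => ⟨h i le_rfl, fun j hj => h j (Nat.le_of_succ_le hj)⟩, fun h j hj => ?_⟩
  rcases hj.eq_or_lt with heq | hlt
  exacts [Fin.ext heq ▸ h.1, h.2 j hlt]

lemma sum_fin_sub (f : ℕ → ℝ) (n : ℕ) : ∑ i : Fin n, (f (i + 1) - f i) = f n - f 0 := by
  rw [Fin.sum_univ_eq_sum_range fun i => f (i + 1) - f i, Finset.sum_range_sub]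

variable [Fintype X] [Fintype Y] {p : (Fin n → X) × (Fin n → Y) → ℝ}

section ChainRules

variable (p) (φ : (Fin n → X) → M)

lemma condEntOf_source_partialObs (i : Fin n) (b : ℕ) :
    condEntOf p (fun ω => ω.1 i) (partialObs φ i b) =
      entOf p (partialObs φ (i + 1) b) - entOf p (partialObs φ i b) :=
  congrArg (· - _) <| entOf_congr p fun ω ω' => by
    simp only [Prod.mk.injEq, partialObs_eq_iff, fin_forall_lt_succ_iff, and_assoc]

lemma condEntOf_side_partialObs (i : Fin n) (a : ℕ) :
    condEntOf p (fun ω => ω.2 i) (partialObs φ a (i + 1)) =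
      entOf p (partialObs φ a i) - entOf p (partialObs φ a (i + 1)) :=
  congrArg (· - _) <| entOf_congr p fun ω ω' => by
    simp only [Prod.mk.injEq, partialObs_eq_iff, fin_forall_ge_iff]
    tauto

lemma entOf_partialObs_source : entOf p (partialObs φ n n) = entOf p Prod.fst :=
  entOf_congr p fun ω ω' => by
    rw [partialObs_eq_iff]
    refine ⟨fun h => funext fun i => h.1 i i.2, fun h => ⟨fun i _ => congrFun h i, fun i hi => ?_,
      congrArg φ h⟩⟩
    exact absurd i.2 hi.not_gt

lemma entOf_partialObs_all : entOf p (partialObs φ n 0) = entOf p id :=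
  entOf_congr p fun ω ω' => by
    rw [partialObs_eq_iff, id, id]
    refine ⟨fun h => Prod.ext (funext fun i => h.1 i i.2) (funext fun i => h.2.1 i (Nat.zero_le i)),
      ?_⟩
    rintro rfl
    simp

lemma csiszar_sum :
    ∑ i : Fin n, condEntOf p (fun ω => ω.1 i) (partialObs φ i (i + 1)) -
      ∑ i : Fin n, condEntOf p (fun ω => ω.2 i) (partialObs φ i (i + 1)) =
      entOf p Prod.fst - entOf p (partialObs φ 0 0) := by
  simp only [condEntOf_source_partialObs, condEntOf_side_partialObs, ← Finset.sum_sub_distrib,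
    sub_sub_sub_cancel_right]
  rw [sum_fin_sub fun k => entOf p (partialObs φ k k), entOf_partialObs_source]

lemma sum_condEntOf_source_given_side :
    ∑ i : Fin n, condEntOf p (fun ω => ω.1 i) (partialObs φ i 0) =
      entOf p id - entOf p (partialObs φ 0 0) := by
  simp only [condEntOf_source_partialObs]
  rw [sum_fin_sub fun k => entOf p (partialObs φ k 0), entOf_partialObs_all]

end ChainRules

lemma entOf_side_message_le [Fintype M] (hp : IsPMF p) (φ : (Fin n → X) → M) :
    entOf p (partialObs φ 0 0) ≤ entOf p Prod.snd + Real.logb 2 (Fintype.card M) := by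
  have hobs : entOf p (partialObs φ 0 0) = entOf p fun ω => (φ ω.1, ω.2) :=
    entOf_congr p fun ω ω' => by
      simp [partialObs_eq_iff, funext_iff, and_comm]
  have hcond : entOf p (fun ω => (φ ω.1, ω.2)) = entOf p Prod.snd +
      condEntOf p (fun ω => φ ω.1) Prod.snd := (add_sub_cancel _ _).symm
  have hle := condEntOf_le_entOf hp (fun ω => φ ω.1) Prod.snd
  linarith [entOf_le_logb_card hp fun ω => φ ω.1]

/-- The law of the letters of a block at a uniformly random time, for a block drawn from `p`. -/
def letterLaw (φ : (Fin n → X) → M) (g : M → (Fin n → Y) → Fin n → Z)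
    (p : (Fin n → X) × (Fin n → Y) → ℝ) :
    (((Fin n → Option X) × (Fin n → Option Y) × M) × Fin n) × X × Y × Z → ℝ :=
  probEq (timeShare (Fin n) p) (blockLetters φ g)

variable [NeZero n] [Fintype Z] [Fintype M] {φ : (Fin n → X) → M}
  {g : M → (Fin n → Y) → Fin n → Z}

lemma isPMF_letterLaw (hp : IsPMF p) : IsPMF (letterLaw φ g p) :=
  hp.timeShare.probEq _

lemma entOf_source_le_letterLaw (hp : IsPMF p) :
    entOf p Prod.fst ≤ n * entOf (letterLaw φ g p) fun t => t.2.1 := by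
  have h := entOf_le_card_mul_entOf_timeShare hp fun (i : Fin n) ω => ω.1 i
  rw [Fintype.card_fin] at h
  exact h.trans_eq (by rw [letterLaw, entOf_probEq]; rfl)

lemma entOf_side_le_letterLaw (hp : IsPMF p) :
    entOf p Prod.snd ≤ n * entOf (letterLaw φ g p) fun t => t.2.2.1 := by
  have h := entOf_le_card_mul_entOf_timeShare hp fun (i : Fin n) ω => ω.2 i
  rw [Fintype.card_fin] at h
  exact h.trans_eq (by rw [letterLaw, entOf_probEq]; rfl)

lemma entOf_le_letterLaw (hp : IsPMF p) :
    entOf p id ≤ n * entOf (letterLaw φ g p) fun t => (t.2.1, t.2.2.1) := by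
  have hseq : entOf p id = entOf p pairSeq := entOf_congr p fun ω ω' => by
    simp [pairSeq, Prod.ext_iff, funext_iff, forall_and]
  have h := entOf_le_card_mul_entOf_timeShare hp fun (i : Fin n) ω => (ω.1 i, ω.2 i)
  rw [Fintype.card_fin] at h
  exact hseq.trans_le (h.trans_eq (by rw [letterLaw, entOf_probEq]; rfl))

lemma mul_crossEntOf_letterLaw (hp : ∀ ω, 0 ≤ p ω) {P : X × Y → ℝ}
    (hsupp : ∀ ω, 0 < p ω → ∀ i, 0 < P (ω.1 i, ω.2 i)) :
    n * crossEntOf (letterLaw φ g p) (fun t => (t.2.1, t.2.2.1)) P =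
      crossEntOf p id (iidPair P n) := by
  have h := crossEntOf_prod_eq_card_mul hp (fun i ω => (ω.1 i, ω.2 i)) hsupp
  rw [Fintype.card_fin] at h
  rw [letterLaw, crossEntOf_probEq]
  exact h.symm

lemma mul_sub_condEntOf_letterLaw (hp : ∀ ω, 0 ≤ p ω) :
    n * (condEntOf (letterLaw φ g p) (fun t => t.2.1) (fun t => t.1) -
      condEntOf (letterLaw φ g p) (fun t => t.2.2.1) fun t => t.1) =
      entOf p Prod.fst - entOf p (partialObs φ 0 0) := by
  rw [letterLaw, condEntOf_probEq, condEntOf_probEq, ← csiszar_sum p φ, mul_sub,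
    ← card_mul_condEntOf_timeShare hp (fun (i : Fin n) ω => ω.1 i),
    ← card_mul_condEntOf_timeShare hp (fun (i : Fin n) ω => ω.2 i), Fintype.card_fin]
  rfl

lemma sub_le_mul_condEntOf_letterLaw (hp : ∀ ω, 0 ≤ p ω) :
    entOf p id - entOf p (partialObs φ 0 0) ≤
      n * condEntOf (letterLaw φ g p) (fun t => t.2.1) fun t => ((t.2.2.2, t.2.2.1), t.1) := by
  have hassoc : condEntOf (timeShare (Fin n) p) (fun t => (blockLetters φ g t).2.1)
      (fun t => (((blockLetters φ g t).2.2.2, (blockLetters φ g t).2.2.1),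
        (blockLetters φ g t).1)) =
      condEntOf (timeShare (Fin n) p) (fun t => t.2.1 t.1)
        fun t => (((g (φ t.2.1) t.2.2 t.1, t.2.2 t.1), partialObs φ t.1 (t.1 + 1) t.2), t.1) :=
    condEntOf_congr _ _ fun t t' => by simp only [blockLetters, Prod.mk.injEq, and_assoc]
  have hsum := card_mul_condEntOf_timeShare hp (fun (i : Fin n) ω => ω.1 i) fun i ω =>
    ((g (φ ω.1) ω.2 i, ω.2 i), partialObs φ i (i + 1) ω)
  rw [letterLaw, condEntOf_probEq, hassoc, ← sum_condEntOf_source_given_side]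
  rw [Fintype.card_fin] at hsum
  rw [hsum]
  refine Finset.sum_le_sum fun i _ => condEntOf_le_of_determines hp _ fun ω ω' h => ?_
  obtain ⟨hpast, hside, hmsg⟩ := partialObs_eq_iff.1 h
  have hside : ω.2 = ω'.2 := funext fun j => hside j (Nat.zero_le j)
  simp only [Prod.mk.injEq, partialObs_eq_iff, hmsg, hside, implies_true, and_true, true_and]
  exact hpast

variable {P : X × Y → ℝ}

lemma mul_relEntOf_letterLaw_le (hp : IsPMF p) (hsupp : ∀ ω, 0 < p ω → ∀ i, 0 < P (ω.1 i, ω.2 i)) :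
    n * relEntOf (letterLaw φ g p) (fun t => (t.2.1, t.2.2.1)) P ≤
      relEntOf p id (iidPair P n) := by
  rw [relEntOf, relEntOf, mul_sub, mul_crossEntOf_letterLaw hp.1 hsupp]
  exact sub_le_sub_left (entOf_le_letterLaw hp) _

lemma mul_entOf_letterLaw_le (hp : IsPMF p) (hP : IsPMF P)
    (hsupp : ∀ ω, 0 < p ω → ∀ i, 0 < P (ω.1 i, ω.2 i)) :
    n * entOf (letterLaw φ g p) (fun t => (t.2.1, t.2.2.1)) ≤
      entOf p id + relEntOf p id (iidPair P n) := by
  have hq : IsPMF (letterLaw φ g p) := isPMF_letterLaw hp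
  have hle := entOf_le_crossEntOf (A := fun t => (t.2.1, t.2.2.1)) hq.1 hP.1
    (hP.2.trans hq.2.symm).le fun t ht => by
      obtain ⟨s, rfl, hs⟩ := exists_pos_of_probEq_pos ht
      exact hsupp s.2 (timeShare_pos_iff.1 hs) s.1
  rw [relEntOf, add_sub_cancel, ← mul_crossEntOf_letterLaw (φ := φ) (g := g) hp.1 hsupp]
  exact mul_le_mul_of_nonneg_left hle n.cast_nonneg

lemma mul_markovDefect_letterLaw_le (hp : IsPMF p) (hP : IsPMF P)
    (hsupp : ∀ ω, 0 < p ω → ∀ i, 0 < P (ω.1 i, ω.2 i)) :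
    n * markovDefect (letterLaw φ g p) ≤ relEntOf p id (iidPair P n) := by
  have hjoint := mul_entOf_letterLaw_le (φ := φ) (g := g) hp hP hsupp
  have hswap : condEntOf (letterLaw φ g p) (fun t => t.2.2.1) (fun t => t.2.1) =
      entOf (letterLaw φ g p) (fun t => (t.2.1, t.2.2.1)) -
        entOf (letterLaw φ g p) fun t => t.2.1 :=
    congrArg (· - _) (entOf_congr _ fun t t' => by simp only [Prod.mk.injEq, and_comm])
  rw [markovDefect_eq, hswap, mul_sub, mul_add, mul_sub_condEntOf_letterLaw hp.1, mul_sub]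
  linarith [entOf_source_le_letterLaw (φ := φ) (g := g) hp,
    sub_le_mul_condEntOf_letterLaw (φ := φ) (g := g) hp.1]

lemma mul_auxRate_letterLaw_le (hp : IsPMF p) (hP : IsPMF P)
    (hsupp : ∀ ω, 0 < p ω → ∀ i, 0 < P (ω.1 i, ω.2 i)) :
    n * auxRate (letterLaw φ g p) ≤
      Real.logb 2 (Fintype.card M) + relEntOf p id (iidPair P n) := by
  have hjoint := mul_entOf_letterLaw_le (φ := φ) (g := g) hp hP hsupp
  have hdrop : condEntOf (letterLaw φ g p) (fun t => t.2.1) (fun t => ((t.2.2.2, t.2.2.1), t.1)) ≤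
      condEntOf (letterLaw φ g p) (fun t => t.2.1) fun t => (t.2.2.1, t.1) :=
    condEntOf_le_of_determines (isPMF_letterLaw hp).1 _ fun t t' h => by
      simp only [Prod.mk.injEq] at h ⊢
      exact ⟨h.1.2, h.2⟩
  rw [auxRate_eq, condEntOf, mul_sub, mul_sub]
  linarith [mul_le_mul_of_nonneg_left hdrop n.cast_nonneg, entOf_side_message_le hp φ,
    entOf_side_le_letterLaw (φ := φ) (g := g) hp,
    sub_le_mul_condEntOf_letterLaw (φ := φ) (g := g) hp.1]

lemma distortion_letterLaw_le {d : X → Z → ℝ} {D : ℝ} (hp : IsPMF p)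
    (hd : ∀ ω, 0 < p ω → (∑ i, d (ω.1 i) (g (φ ω.1) ω.2 i)) / n ≤ D) :
    ∑ t, letterLaw φ g p t * d t.2.1 t.2.2.2 ≤ D := by
  have hn : (0 : ℝ) < n := by exact_mod_cast NeZero.pos n
  have hsum := card_mul_sum_timeShare_mul p fun (i : Fin n) ω => d (ω.1 i) (g (φ ω.1) ω.2 i)
  rw [Fintype.card_fin] at hsum
  refine le_of_mul_le_mul_left ?_ hn
  calc n * ∑ t, letterLaw φ g p t * d t.2.1 t.2.2.2
      = ∑ ω, p ω * ∑ i, d (ω.1 i) (g (φ ω.1) ω.2 i) := by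
        rw [letterLaw, ← hsum,
          sum_probEq_mul _ (blockLetters φ g) fun t => d t.2.1 t.2.2.2]
        rfl
    _ ≤ ∑ ω, p ω * (D * n) := Finset.sum_le_sum fun ω _ => by
        rcases (hp.1 ω).eq_or_lt with h0 | hω
        · simp [← h0]
        · exact mul_le_mul_of_nonneg_left ((div_le_iff₀ hn).1 (hd ω hω)) hω.le
    _ = n * D := by rw [← Finset.sum_mul, hp.2, one_mul, mul_comm]

lemma isApproxTestChannel_letterLaw {d : X → Z → ℝ} {D R : ℝ} (hp : IsPMF p) (hP : IsPMF P)
    (hsupp : ∀ ω, 0 < p ω → ∀ i, 0 < P (ω.1 i, ω.2 i))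
    (hd : ∀ ω, 0 < p ω → (∑ i, d (ω.1 i) (g (φ ω.1) ω.2 i)) / n ≤ D)
    (hM : Real.logb 2 (Fintype.card M) ≤ n * R) :
    IsApproxTestChannel P d D R (relEntOf p id (iidPair P n) / n) (letterLaw φ g p) := by
  have hn : (0 : ℝ) < n := by exact_mod_cast NeZero.pos n
  constructor
  case isPMF => exact isPMF_letterLaw hp
  case eq_zero_of_source_eq_zero =>
    refine fun t ht => probEq_eq_zero ?_
    rintro s rfl
    refine ((timeShare_nonneg hp.1 s).eq_or_lt.resolve_right fun hs => ?_).symm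
    exact (hsupp s.2 (timeShare_pos_iff.1 hs) s.1).ne' ht
  case auxRate_le =>
    rw [← sub_le_iff_le_add', le_div_iff₀' hn]
    linarith [mul_auxRate_letterLaw_le (φ := φ) (g := g) hp hP hsupp]
  case markovDefect_le => exact (le_div_iff₀' hn).2 (mul_markovDefect_letterLaw_le hp hP hsupp)
  case relEntOf_source_le => exact (le_div_iff₀' hn).2 (mul_relEntOf_letterLaw_le hp hsupp)
  case distortion_le => exact distortion_letterLaw_le hp hd

end SingleLetterization

section Conditioning

variable {Ω : Type*} [Fintype Ω] {p : Ω → ℝ} {S : Set Ω}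

open Classical in
/-- The law `p` conditioned on the event `S`; it is zero if `S` has probability zero. -/
def condLaw (p : Ω → ℝ) (S : Set Ω) (ω : Ω) : ℝ :=
  (if ω ∈ S then p ω else 0) / probSet p S

lemma condLaw_of_mem {ω : Ω} (hω : ω ∈ S) : condLaw p S ω = p ω / probSet p S := by
  rw [condLaw, if_pos hω]

lemma mem_of_condLaw_pos {ω : Ω} (hω : 0 < condLaw p S ω) : ω ∈ S := by
  by_contra hS
  simp [condLaw, hS] at hω

lemma isPMF_condLaw (hp : ∀ ω, 0 ≤ p ω) (hS : 0 < probSet p S) : IsPMF (condLaw p S) := by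
  refine ⟨fun ω => div_nonneg ?_ hS.le, ?_⟩
  · split_ifs
    exacts [hp ω, le_rfl]
  · simp only [condLaw, ← Finset.sum_div]
    exact div_self hS.ne'

lemma pos_of_condLaw_pos (hS : 0 < probSet p S) {ω : Ω} (hω : 0 < condLaw p S ω) : 0 < p ω := by
  rw [condLaw_of_mem (mem_of_condLaw_pos hω)] at hω
  exact (div_pos_iff_of_pos_right hS).1 hω

-- On `S` the density of `condLaw p S` with respect to `p` is the constant `1 / probSet p S`.
lemma relEntOf_condLaw (hp : ∀ ω, 0 ≤ p ω) (hS : 0 < probSet p S) :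
    relEntOf (condLaw p S) id p = -Real.logb 2 (probSet p S) := by
  have hc := isPMF_condLaw hp hS
  rw [relEntOf, crossEntOf, entOf, neg_sub_neg, ← Finset.sum_sub_distrib]
  calc ∑ ω, (condLaw p S ω * Real.logb 2 (probEq (condLaw p S) id (id ω)) -
        condLaw p S ω * Real.logb 2 (p (id ω)))
      = ∑ ω, condLaw p S ω * -Real.logb 2 (probSet p S) := Finset.sum_congr rfl fun ω _ => by
        rcases (hc.1 ω).eq_or_lt with h0 | hω
        · simp [← h0]
        · rw [id, probEq_id, condLaw_of_mem (mem_of_condLaw_pos hω),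
            Real.logb_div (pos_of_condLaw_pos hS hω).ne' hS.ne']
          ring
    _ = -Real.logb 2 (probSet p S) := by rw [← Finset.sum_mul, hc.2, one_mul]

lemma probSet_add_probSet_compl (p : Ω → ℝ) (S : Set Ω) :
    probSet p S + probSet p Sᶜ = ∑ ω, p ω := by
  rw [probSet, probSet, ← Finset.sum_add_distrib]
  refine Finset.sum_congr rfl fun ω _ => ?_
  by_cases hω : ω ∈ S <;> simp [hω]

lemma probSet_nonneg (hp : ∀ ω, 0 ≤ p ω) (S : Set Ω) : 0 ≤ probSet p S :=
  Finset.sum_nonneg fun ω _ => by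
    split_ifs
    exacts [hp ω, le_rfl]

end Conditioning

section Achievability

variable {X Y Z : Type*}

/-- The pairs of sequences that a code reproduces with average distortion at most `D`. -/
def lowDistortionSet {M : Type*} {n : ℕ} (d : X → Z → ℝ) (D : ℝ) (φ : (Fin n → X) → M)
    (g : M → (Fin n → Y) → Fin n → Z) : Set ((Fin n → X) × (Fin n → Y)) :=
  {ω | (∑ i, d (ω.1 i) (g (φ ω.1) ω.2 i)) / n ≤ D}

variable [Fintype X] [Fintype Y] [Fintype Z] {P : X × Y → ℝ} {d : X → Z → ℝ} {D R ε : ℝ}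

lemma isPMF_iidPair (hP : IsPMF P) (n : ℕ) : IsPMF (iidPair P n) := by
  classical
  refine ⟨fun xy => Finset.prod_nonneg fun i _ => hP.1 _, ?_⟩
  rw [← (Equiv.arrowProdEquivProdArrow (Fin n) (fun _ => X) fun _ => Y).sum_comp]
  exact (Fintype.sum_pow P n).symm.trans (by rw [hP.2, one_pow])

lemma isApproxTestChannel_of_code {M : Type*} [Fintype M] {n : ℕ} [NeZero n] (hP : IsPMF P)
    {φ : (Fin n → X) → M} {g : M → (Fin n → Y) → Fin n → Z}
    (hM : Real.logb 2 (Fintype.card M) ≤ n * R)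
    (hS : 0 < probSet (iidPair P n) (lowDistortionSet d D φ g)) :
    IsApproxTestChannel P d D R
      (-Real.logb 2 (probSet (iidPair P n) (lowDistortionSet d D φ g)) / n)
      (letterLaw φ g (condLaw (iidPair P n) (lowDistortionSet d D φ g))) := by
  have hiid := isPMF_iidPair hP n
  rw [← relEntOf_condLaw hiid.1 hS]
  refine isApproxTestChannel_letterLaw (isPMF_condLaw hiid.1 hS) hP (fun ω hω i => ?_)
    (fun ω hω => (mem_of_condLaw_pos hω :)) hM
  exact (hP.1 _).lt_of_ne' fun h0 =>
    (pos_of_condLaw_pos hS hω).ne' (Finset.prod_eq_zero (Finset.mem_univ i) h0)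

lemma wzAchievable.eventually_exists_code (hP : IsPMF P) (hε : ε < 1)
    (h : wzAchievable P d D R ε) :
    ∀ᶠ n in atTop, ∃ (M : ℕ) (φ : (Fin n → X) → Fin M) (g : Fin M → (Fin n → Y) → Fin n → Z),
      Real.logb 2 M ≤ n * R ∧ (1 - ε) / 2 ≤ probSet (iidPair P n) (lowDistortionSet d D φ g) := by
  obtain ⟨hR, M, φ, g, hM, hlim⟩ := h
  have hexcess : limsup (fun n => probSet (iidPair P n) (lowDistortionSet d D (φ n) (g n))ᶜ) atTop
      ≤ ε := by
    simpa only [probSet, lowDistortionSet, Set.mem_compl_iff, Set.mem_ofPred_eq, not_le] using hlim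
  have hsplit : ∀ n, probSet (iidPair P n) (lowDistortionSet d D (φ n) (g n)) +
      probSet (iidPair P n) (lowDistortionSet d D (φ n) (g n))ᶜ = 1 := fun n =>
    (probSet_add_probSet_compl _ _).trans (isPMF_iidPair hP n).2
  have hbdd : IsBoundedUnder (· ≤ ·) atTop
      fun n => probSet (iidPair P n) (lowDistortionSet d D (φ n) (g n))ᶜ :=
    isBoundedUnder_of ⟨1, fun n => by
      linarith [hsplit n, probSet_nonneg (isPMF_iidPair hP n).1 (lowDistortionSet d D (φ n) (g n))]⟩
  have hev := eventually_lt_of_limsup_lt (hexcess.trans_lt (by linarith : ε < (1 + ε) / 2)) hbdd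
  filter_upwards [hev] with n hn
  refine ⟨M n, φ n, g n, ?_, by linarith [hsplit n]⟩
  rcases (M n).eq_zero_or_pos with h0 | hpos
  · simpa [h0] using mul_nonneg n.cast_nonneg hR.le
  · exact (Real.logb_le_iff_le_rpow one_lt_two (by exact_mod_cast hpos)).2 (hM n)

lemma wzAchievable.exists_isApproxTestChannel (hP : IsPMF P) (hε : ε < 1)
    (h : wzAchievable P d D R ε) {δ : ℝ} (hδ : 0 < δ) :
    ∃ q : Fin (Fintype.card (X × Y × Z) + 1) × X × Y × Z → ℝ,
      IsApproxTestChannel P d D R δ q := by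
  have hR : 0 < R := h.1
  set l := (R + δ) / δ
  set c := (1 - ε) / 2
  have hl : 0 < l := by positivity
  have hc : 0 < c := by simp only [c]; linarith
  have hsmall : ∀ᶠ n : ℕ in atTop, (1 + l) * -Real.logb 2 c / n < δ :=
    (tendsto_const_div_atTop_nhds_zero_nat _).eventually_lt_const hδ
  obtain ⟨n, ⟨M, φ, g, hM, hprob⟩, hn, hpos⟩ :=
    ((h.eventually_exists_code hP hε).and (hsmall.and (eventually_gt_atTop 0))).exists
  have : NeZero n := ⟨hpos.ne'⟩
  have hlog : -Real.logb 2 (probSet (iidPair P n) (lowDistortionSet d D φ g)) ≤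
      -Real.logb 2 c := neg_le_neg (Real.logb_le_logb_of_le one_lt_two hc hprob)
  have hq := isApproxTestChannel_of_code hP (by rwa [Fintype.card_fin]) (hc.trans_le hprob)
  refine hq.exists_fin hl ?_ (div_mul_cancel₀ (R + δ) hδ.ne').ge
  calc (1 + l) * (-Real.logb 2 (probSet (iidPair P n) (lowDistortionSet d D φ g)) / n)
      ≤ (1 + l) * (-Real.logb 2 c / n) := by gcongr
    _ ≤ δ := by rw [← mul_div_assoc]; exact hn.le

end Achievability

theorem wyner_ziv_converse_auxiliary_general
    {X Y Z : Type*} [Fintype X] [Fintype Y] [Fintype Z] {P : X × Y → ℝ} (hP : IsPMF P)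
    {d : X → Z → ℝ} {D R ε : ℝ} (hε : ε < 1) (hach : wzAchievable P d D R ε) :
    (∃ q : Fin (Fintype.card (X × Y × Z) + 1) × X × Y × Z → ℝ, IsTestChannel P d D R q) ∧
      Rmin P d D ≤ R := by
  obtain ⟨q, hq⟩ := exists_isApproxTestChannel_zero fun _ hδ =>
    hach.exists_isApproxTestChannel hP hε hδ
  have htest := hq.isTestChannel hP
  exact ⟨⟨q, htest⟩, Rmin_le_of_isTestChannel hP htest⟩

/-- For every `ε ∈ [0,1)` and every `ε`-achievable rate `R` in the
Wyner–Ziv problem, there exists a pmf `P* = P*_{UXYZ}` on `𝒰×𝒳×𝒴×𝒵` with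
`|𝒰| ≤ |𝒳|·|𝒴|·|𝒵| + 1` and `P*_{XY} = P_{XY}` such that `R ≥ I_{P*}(X;U|Y)`,
`I_{P*}(Y;U|X) = 0`, `I_{P*}(X;Z|Y,U) = 0`, and `E_{P*}[d(X,Z)] ≤ D`;
in particular `R ≥ R_min`. -/
theorem wyner_ziv_converse_auxiliary
    {X Y Z : Type*} [Fintype X] [Fintype Y] [Fintype Z]
    (P : X × Y → ℝ) (hP : IsPMF P)
    (d : X → Z → ℝ) (hd : ∀ x z, 0 ≤ d x z) (D : ℝ) (hD : 0 < D)
    (ε : ℝ) (hε0 : 0 ≤ ε) (hε1 : ε < 1)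
    (R : ℝ) (hach : wzAchievable P d D R ε) :
    (∃ m : ℕ, m ≤ Fintype.card X * Fintype.card Y * Fintype.card Z + 1 ∧
      ∃ Pstar : Fin m × X × Y × Z → ℝ, IsPMF Pstar ∧
        (∀ x y, probEq Pstar (fun q => (q.2.1, q.2.2.1)) (x, y) = P (x, y)) ∧
        condMIOf Pstar (fun q => q.2.1) (fun q => q.1) (fun q => q.2.2.1) ≤ R ∧
        condMIOf Pstar (fun q => q.2.2.1) (fun q => q.1) (fun q => q.2.1) = 0 ∧
        condMIOf Pstar (fun q => q.2.1) (fun q => q.2.2.2)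
          (fun q => (q.2.2.1, q.1)) = 0 ∧
        (∑ q, Pstar q * d q.2.1 q.2.2.2) ≤ D) ∧
    Rmin P d D ≤ R := by
  obtain ⟨⟨q, hq⟩, hR⟩ := wyner_ziv_converse_auxiliary_general hP hε1 hach
  exact ⟨⟨_, by simp [mul_assoc], q, hq.isPMF, hq.source_eq, hq.auxRate_le, hq.condMIOf_side_aux,
    hq.condMIOf_source_reproduction, hq.distortion_le⟩, hR⟩
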